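/- Every named Boolean formula b with FN(b) ⊆ X ∪ {a}, where X is a finite set of names and a ∉ X, admits an a-decomposition in X: there exist k and named Boolean formulas d₀,…,d_{k−1} and e₀,…,e_{k−1} with FN(dᵢ) ⊆ {a}, FN(eᵢ) ⊆ X, ⟦⋁_{i<k} dᵢ ∧ eᵢ⟧_{X∪{a}} = ⟦b⟧_{X∪{a}}, and ⟦eᵢ⟧_X ∩ ⟦eⱼ⟧_X = ∅ for i ≠ j. -/

import Mathlib

/-!
The set of formulas admitting a decomposition is not visibly closed under negation. It becomes so
once the sets `⟦eᵢ⟧` are also required to cover the whole space: then `b` agrees with `dᵢ` on the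
block `⟦eᵢ⟧`, hence `¬b` agrees with `¬dᵢ` there, and a conjunction is handled on the common
refinement of the two partitions. Splitting a variable `x` with name in `X` into the blocks
`x` and `¬x` starts the induction.
-/

open MeasureTheory

/-- The Cantor space `2^ω` of infinite binary sequences. -/
abbrev Cantor : Type := ℕ → Bool

/-- Rational numbers in the unit interval `[0,1]`. -/
abbrev I01 : Type := (Set.Icc (0 : ℚ) 1)

/-- The value of a rational `q ∈ [0,1]` as an extended nonnegative real. -/
noncomputable def qq (q : I01) : ENNReal := ENNReal.ofReal (q.1 : ℝ)

/-- `μ` is the fair-coin Bernoulli (uniform) product measure on the Cantor space: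
it is a probability measure giving each cylinder fixing the values on a finite set `s`
of coordinates the measure `2^{-|s|}`. -/
def IsCantorMeasure (μ : Measure Cantor) : Prop :=
  IsProbabilityMeasure μ ∧
    ∀ (s : Finset ℕ) (v : ℕ → Bool),
      μ {f : Cantor | ∀ i ∈ s, f i = v i} = (2 : ENNReal)⁻¹ ^ s.card

/-- Valuations of the names in a finite name set `X`: the space `(2^ω)^X`. -/
abbrev Val (X : Finset ℕ) : Type := {a : ℕ // a ∈ X} → Cantor

/-- `combine f g` is the common extension `f + g` of valuations `f ∈ (2^ω)^X` and
`g ∈ (2^ω)^Y`: it agrees with `f` on `X` and with `g` on `Y` (when `X` and `Y` are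
disjoint this is the `f + g` of the paper). -/
def combine {X Y : Finset ℕ} (f : Val X) (g : Val Y) : Val (X ∪ Y) :=
  fun a =>
    if h : a.1 ∈ Y then g ⟨a.1, h⟩
    else f ⟨a.1, (Finset.mem_union.mp a.2).resolve_right h⟩

/-- The `f`-projection `Π_f(𝒳) = {g ∈ (2^ω)^Y | f + g ∈ 𝒳}` of a set
`𝒳 ⊆ (2^ω)^{X∪Y}` along `f ∈ (2^ω)^X`. -/
def proj {X Y : Finset ℕ} (f : Val X) (S : Set (Val (X ∪ Y))) : Set (Val Y) :=
  {g | combine f g ∈ S}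

/-- The fair-coin Bernoulli (uniform) product measure on `(2^ω)^X`, obtained as the
pushforward of the Cantor measure `μ` along the (coordinate-separating) injection
determined by the pairing function: the coordinates `(a, i)` are i.i.d. fair coins. -/
noncomputable def cantorPi (μ : Measure Cantor) (X : Finset ℕ) : Measure (Val X) :=
  Measure.map (fun (g : Cantor) (a : {x : ℕ // x ∈ X}) (i : ℕ) => g (Nat.pair a.1 i)) μ

/-- Named Boolean formulas `b ::= xᵢᵃ | ⊤ | ⊥ | ¬b | b ∧ c | b ∨ c`.
`NBF.var i a` is the named propositional variable `xᵢᵃ`. -/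
inductive NBF : Type where
  | var : ℕ → ℕ → NBF
  | tt : NBF
  | ff : NBF
  | neg : NBF → NBF
  | conj : NBF → NBF → NBF
  | disj : NBF → NBF → NBF
deriving DecidableEq

/-- The set of (free) names occurring in a named Boolean formula. -/
def NBF.FN : NBF → Finset ℕ
  | .var _ a => {a}
  | .tt => ∅
  | .ff => ∅
  | .neg b => b.FN
  | .conj b c => b.FN ∪ c.FN
  | .disj b c => b.FN ∪ c.FN

/-- The interpretation `⟦b⟧_X ⊆ (2^ω)^X` of a named Boolean formula with `FN(b) ⊆ X`. -/
def NBF.semN : NBF → (X : Finset ℕ) → Set (Val X)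
  | .var i a, X => {f | ∀ h : a ∈ X, f ⟨a, h⟩ i = true}
  | .tt, _ => Set.univ
  | .ff, _ => ∅
  | .neg b, X => (b.semN X)ᶜ
  | .conj b c, X => b.semN X ∩ c.semN X
  | .disj b c, X => b.semN X ∪ c.semN X

/-- The disjunction `⋁_{i<k} c i` of a finite family of named Boolean formulas. -/
def NBF.bigDisj {k : ℕ} (c : Fin k → NBF) : NBF :=
  (List.ofFn c).foldr NBF.disj NBF.ff

namespace NBF

variable {ι κ : Type*} {X Y : Finset ℕ} {b c : NBF} {d e : ι → NBF} {d' e' : κ → NBF}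

theorem semN_bigDisj {k : ℕ} (c : Fin k → NBF) (X : Finset ℕ) :
    (bigDisj c).semN X = ⋃ i, (c i).semN X := by
  have semN_foldr (l : List NBF) : (l.foldr disj ff).semN X = ⋃ c ∈ l, c.semN X := by
    induction l with
    | nil => simp [semN]
    | cons c l ih => simp [semN, ih, Set.iUnion_or, Set.iUnion_union_distrib]
  ext f
  simp [bigDisj, semN_foldr]

/-- An `a`-decomposition `⋁ᵢ dᵢ ∧ eᵢ` of `b` in `X`, with a finite set `Y` of names in place of
`{a}`, in a strengthened form suited to induction on `b`: the sets `⟦eᵢ⟧` also cover the whole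
space. Equality of `b` with the disjunction is encoded blockwise, as agreement of `b` with `dᵢ`
on `⟦eᵢ⟧`. -/
structure IsDecomposition (X Y : Finset ℕ) (b : NBF) (d e : ι → NBF) : Prop where
  FN_left_subset (i : ι) : (d i).FN ⊆ Y
  FN_right_subset (i : ι) : (e i).FN ⊆ X
  exists_mem (f : Val (X ∪ Y)) : ∃ i, f ∈ (e i).semN (X ∪ Y)
  pairwise_disjoint : Pairwise fun i j => Disjoint ((e i).semN X) ((e j).semN X)
  mem_iff {i : ι} {f : Val (X ∪ Y)} (hf : f ∈ (e i).semN (X ∪ Y)) :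
    f ∈ b.semN (X ∪ Y) ↔ f ∈ (d i).semN (X ∪ Y)

namespace IsDecomposition

theorem of_FN_subset_left (hb : b.FN ⊆ Y) :
    IsDecomposition X Y b (fun _ : Unit => b) (fun _ => tt) where
  FN_left_subset _ := hb
  FN_right_subset _ := Finset.empty_subset X
  exists_mem f := ⟨(), Set.mem_univ f⟩
  pairwise_disjoint := Subsingleton.pairwise
  mem_iff _ := Iff.rfl

theorem of_FN_subset_right (hb : b.FN ⊆ X) :
    IsDecomposition X Y b (fun t : Bool => if t then tt else ff)
      (fun t => if t then b else b.neg) where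
  FN_left_subset t := by cases t <;> exact Finset.empty_subset Y
  FN_right_subset t := by cases t <;> exact hb
  exists_mem f := by simpa [semN] using em' (f ∈ b.semN (X ∪ Y))
  pairwise_disjoint := by
    rintro (_ | _) (_ | _) h <;> simp_all [semN, disjoint_compl_left, disjoint_compl_right]
  mem_iff {t f} hf := by cases t <;> simp_all [semN]

theorem congr (h : IsDecomposition X Y b d e) (hbc : b.semN (X ∪ Y) = c.semN (X ∪ Y)) :
    IsDecomposition X Y c d e :=
  { h with mem_iff := fun hf => hbc ▸ h.mem_iff hf }

theorem neg (h : IsDecomposition X Y b d e) :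
    IsDecomposition X Y b.neg (fun i => (d i).neg) e :=
  { h with mem_iff := fun hf => not_congr (h.mem_iff hf) }

theorem conj (hb : IsDecomposition X Y b d e) (hc : IsDecomposition X Y c d' e') :
    IsDecomposition X Y (b.conj c) (fun p : ι × κ => (d p.1).conj (d' p.2))
      (fun p => (e p.1).conj (e' p.2)) where
  FN_left_subset p := Finset.union_subset (hb.FN_left_subset p.1) (hc.FN_left_subset p.2)
  FN_right_subset p := Finset.union_subset (hb.FN_right_subset p.1) (hc.FN_right_subset p.2)
  exists_mem f :=
    let ⟨i, hi⟩ := hb.exists_mem f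
    let ⟨j, hj⟩ := hc.exists_mem f
    ⟨(i, j), hi, hj⟩
  pairwise_disjoint p q hpq := by
    by_cases hfst : p.1 = q.1
    · have hsnd : p.2 ≠ q.2 := fun hsnd => hpq (Prod.ext hfst hsnd)
      exact (hc.pairwise_disjoint hsnd).mono Set.inter_subset_right Set.inter_subset_right
    · exact (hb.pairwise_disjoint hfst).mono Set.inter_subset_left Set.inter_subset_left
  mem_iff hf := and_congr (hb.mem_iff hf.1) (hc.mem_iff hf.2)

theorem disj (hb : IsDecomposition X Y b d e) (hc : IsDecomposition X Y c d' e') :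
    IsDecomposition X Y (b.disj c) (fun p : ι × κ => ((d p.1).neg.conj (d' p.2).neg).neg)
      (fun p => (e p.1).conj (e' p.2)) :=
  (hb.neg.conj hc.neg).neg.congr (by simp [semN, Set.compl_inter])

theorem comp_equiv (h : IsDecomposition X Y b d e) (σ : κ ≃ ι) :
    IsDecomposition X Y b (d ∘ σ) (e ∘ σ) where
  FN_left_subset i := h.FN_left_subset (σ i)
  FN_right_subset i := h.FN_right_subset (σ i)
  exists_mem f := σ.surjective.exists.mp (h.exists_mem f)
  pairwise_disjoint := h.pairwise_disjoint.comp_of_injective σ.injective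
  mem_iff := h.mem_iff

theorem iUnion_semN_conj (h : IsDecomposition X Y b d e) :
    ⋃ i, ((d i).conj (e i)).semN (X ∪ Y) = b.semN (X ∪ Y) := by
  ext f
  rw [Set.mem_iUnion]
  constructor
  · rintro ⟨i, hd, he⟩
    exact (h.mem_iff he).mpr hd
  · intro hb
    obtain ⟨i, he⟩ := h.exists_mem f
    exact ⟨i, (h.mem_iff he).mp hb, he⟩

end IsDecomposition

theorem exists_isDecomposition (hb : b.FN ⊆ X ∪ Y) :
    ∃ (ι : Type) (_ : Finite ι) (d e : ι → NBF), IsDecomposition X Y b d e := by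
  induction b with
  | var i a =>
    rcases Finset.mem_union.mp (Finset.singleton_subset_iff.mp hb) with haX | haY
    · exact ⟨_, inferInstance, _, _,
        .of_FN_subset_right (Finset.singleton_subset_iff.mpr haX)⟩
    · exact ⟨_, inferInstance, _, _,
        .of_FN_subset_left (Finset.singleton_subset_iff.mpr haY)⟩
  | tt => exact ⟨_, inferInstance, _, _, .of_FN_subset_left (Finset.empty_subset Y)⟩
  | ff => exact ⟨_, inferInstance, _, _, .of_FN_subset_left (Finset.empty_subset Y)⟩
  | neg b ih =>
    obtain ⟨ι, _, d, e, h⟩ := ih hb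
    exact ⟨ι, inferInstance, _, _, h.neg⟩
  | conj b c ihb ihc =>
    obtain ⟨ι, _, d, e, h⟩ := ihb (Finset.union_subset_left hb)
    obtain ⟨κ, _, d', e', h'⟩ := ihc (Finset.union_subset_right hb)
    exact ⟨ι × κ, inferInstance, _, _, h.conj h'⟩
  | disj b c ihb ihc =>
    obtain ⟨ι, _, d, e, h⟩ := ihb (Finset.union_subset_left hb)
    obtain ⟨κ, _, d', e', h'⟩ := ihc (Finset.union_subset_right hb)
    exact ⟨ι × κ, inferInstance, _, _, h.disj h'⟩

end NBF

theorem nbf_exists_aDecomposition_general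
    (b : NBF) (X Y : Finset ℕ) (hFN : b.FN ⊆ X ∪ Y) :
    ∃ (k : ℕ) (d e : Fin k → NBF),
      (∀ i, (d i).FN ⊆ Y) ∧ (∀ i, (e i).FN ⊆ X) ∧
      NBF.semN (NBF.bigDisj fun i => (d i).conj (e i)) (X ∪ Y) = NBF.semN b (X ∪ Y) ∧
      (∀ i j, i ≠ j → NBF.semN (e i) X ∩ NBF.semN (e j) X = ∅) := by
  obtain ⟨ι, _, d, e, h⟩ := NBF.exists_isDecomposition hFN
  obtain ⟨k, ⟨σ⟩⟩ := Finite.exists_equiv_fin ι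
  have hσ := h.comp_equiv σ.symm
  exact ⟨k, _, _, hσ.FN_left_subset, hσ.FN_right_subset,
    (NBF.semN_bigDisj _ _).trans hσ.iUnion_semN_conj,
    fun _ _ hij => (hσ.pairwise_disjoint hij).inter_eq⟩

/-- **Existence of `a`-decompositions.** Every named Boolean formula `b`
with `FN(b) ⊆ X ∪ {a}` and `a ∉ X` admits an `a`-decomposition in `X`: there are `k`
and formulas `d₀,…,d_{k-1}`, `e₀,…,e_{k-1}` with `FN(dᵢ) ⊆ {a}`, `FN(eᵢ) ⊆ X`,
`⟦⋁_{i<k} dᵢ ∧ eᵢ⟧_{X∪{a}} = ⟦b⟧_{X∪{a}}`, and `⟦eᵢ⟧_X ∩ ⟦eⱼ⟧_X = ∅` for `i ≠ j`. -/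
theorem nbf_exists_aDecomposition
    (b : NBF) (X : Finset ℕ) (a : ℕ) (ha : a ∉ X) (hFN : b.FN ⊆ X ∪ {a}) :
    ∃ (k : ℕ) (d e : Fin k → NBF),
      (∀ i, (d i).FN ⊆ {a}) ∧ (∀ i, (e i).FN ⊆ X) ∧
      NBF.semN (NBF.bigDisj fun i => (d i).conj (e i)) (X ∪ {a}) = NBF.semN b (X ∪ {a}) ∧
      (∀ i j, i ≠ j → NBF.semN (e i) X ∩ NBF.semN (e j) X = ∅) :=
  nbf_exists_aDecomposition_general b X {a} hFN
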